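/- There is an absolute constant c > 0 such that the following holds. Let q ≥ 3 be an odd integer, let n ≥ 2, and let C : {-1,1}^k → {-1,1}^n be a (q, δ, ε)-normally decodable code. Then k ≤ c · n^{1 - 2/(q+1)} · (log n) / (ε^2 · δ^2). -/

import Mathlib

open Finset
open scoped Classical

noncomputable section

/-- The map sending a Boolean to the corresponding element of `{-1, 1} ⊆ ℝ`. -/
def pmo (b : Bool) : ℝ := if b then 1 else -1

/-- `H` is a `q`-uniform hypergraph matching on `[n]`. -/
def IsMatching {n : ℕ} (q : ℕ) (H : Finset (Finset (Fin n))) : Prop :=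
  (∀ C ∈ H, C.card = q) ∧ Set.Pairwise (H : Set (Finset (Fin n))) Disjoint

/-- A code is `(q, δ, ε)`-normally decodable. -/
def NormallyDecodable (q k n : ℕ) (δ ε : ℝ)
    (Enc : (Fin k → Bool) → Fin n → Bool) : Prop :=
  ∃ H : Fin k → Finset (Finset (Fin n)),
    (∀ i, IsMatching q (H i)) ∧
    (∀ i, δ * n ≤ ((H i).card : ℝ)) ∧
    (∀ i, ∀ C ∈ H i,
      (1 / 2 + ε : ℝ) ≤
        ((Finset.univ.filter (fun b : Fin k → Bool =>
          pmo (b i) = ∏ v ∈ C, pmo (Enc b v))).card : ℝ) / 2 ^ k)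

/-!
Let `A_i` be real symmetric matrices with absolute row sums at most `d`. A Walsh coefficient of
`(∑ b_i A_i) ^ p` is a signed sum of products of the `A_i`, so its row sums are bounded by `d ^ p`
times the same coefficient of `(∑ b_i) ^ p`. Summing over `p` bounds the average over the cube of
`tr exp (s ∑ b_i A_i)` by `N exp (k (s d)² / 2)`, where `N` is the dimension and `k` the number of
matrices. If unit vectors `x_b` satisfy `𝔼 b_i ⟨x_b, A_i x_b⟩ ≥ τ` for all `i`, Jensen's inequality
and optimization in `s` then give `k τ² ≤ 2 d² log N`.

For a `2 r`-uniform matching on `m` points take `A_i` to be the level-`l` Kikuchi matrix, whose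
quadratic form at the vector of products `∏_{v ∈ S} x_v`, `#S = l`, is a multiple of
`∑_C ∏_{v ∈ C} x_v`. Dividing each edge by the sum of the degrees of its endpoints keeps the row
sums below `1`; by Cauchy–Schwarz and a second-moment bound on degrees this costs only a constant
once `l` is about `m ^ (1 - 1 / r)`, where the average degree is of constant order. Odd arities are
reduced to even ones by appending to every hyperedge a fresh coordinate holding the constant `1`.
-/

open scoped BigOperators symmDiff Matrix

/-! ### Walsh coefficients of powers of signed sums -/

lemma pmo_mul_self (b : Bool) : pmo b * pmo b = 1 := by
  cases b <;> simp [pmo]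

lemma prod_mul_prod_eq_prod_symmDiff {α M : Type*} [CommMonoid M] {x : α → M}
    (hx : ∀ v, x v * x v = 1) (S T : Finset α) :
    (∏ v ∈ S, x v) * ∏ v ∈ T, x v = ∏ v ∈ S ∆ T, x v := by
  have hinter : (∏ v ∈ S ∩ T, x v) * ∏ v ∈ S ∩ T, x v = 1 := by
    rw [← prod_mul_distrib]
    exact prod_eq_one fun v _ => hx v
  rw [← prod_inter_mul_prod_sdiff S T, ← prod_inter_mul_prod_sdiff T S, inter_comm T S,
    mul_mul_mul_comm, hinter, one_mul, symmDiff_def, sup_eq_union, prod_union disjoint_sdiff_sdiff]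

section Walsh

variable {ι : Type*}

/-- The Walsh character `χ_S(b) = ∏_{i ∈ S} b_i` of the cube. -/
def walsh (S : Finset ι) (b : ι → Bool) : ℝ := ∏ i ∈ S, pmo (b i)

lemma walsh_mul_pmo (S : Finset ι) (b : ι → Bool) (i : ι) :
    walsh S b * pmo (b i) = walsh (S ∆ {i}) b := by
  rw [walsh, walsh, ← prod_mul_prod_eq_prod_symmDiff fun j => pmo_mul_self (b j), prod_singleton]

variable [Fintype ι]

lemma sum_walsh_nonneg (S : Finset ι) : 0 ≤ ∑ b, walsh S b := by
  have hprod (b : ι → Bool) : walsh S b = ∏ i, if i ∈ S then pmo (b i) else 1 := by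
    rw [walsh, prod_ite_mem, univ_inter]
  simp only [hprod]
  rw [← Fintype.prod_sum fun i (β : Bool) => if i ∈ S then pmo β else 1]
  refine prod_nonneg fun i _ => ?_
  split_ifs <;> simp [pmo]

/-- The signed sum `∑ i, b_i A_i` of a family `A` at a point `b` of the cube. -/
def signedSum {R : Type*} [AddCommMonoid R] [Module ℝ R] (A : ι → R) (b : ι → Bool) : R :=
  ∑ i, pmo (b i) • A i

/-- The Walsh coefficient at `S` of the function `b ↦ (∑ i, b_i A_i) ^ p`, not divided by the size
of the cube so that it makes sense in any real algebra. -/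
def walshCoeff {R : Type*} [Ring R] [Algebra ℝ R] (A : ι → R) (p : ℕ) (S : Finset ι) : R :=
  ∑ b, walsh S b • signedSum A b ^ p

lemma walshCoeff_succ {R : Type*} [Ring R] [Algebra ℝ R] (A : ι → R) (p : ℕ) (S : Finset ι) :
    walshCoeff A (p + 1) S = ∑ i, A i * walshCoeff A p (S ∆ {i}) := by
  simp only [walshCoeff, mul_sum]
  rw [sum_comm]
  refine sum_congr rfl fun b _ => ?_
  rw [pow_succ', signedSum, sum_mul, smul_sum]
  refine sum_congr rfl fun i _ => ?_
  rw [smul_mul_assoc, smul_smul, walsh_mul_pmo, mul_smul_comm]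

variable {V : Type*} [Fintype V]

lemma sum_abs_walshCoeff_le {A : ι → Matrix V V ℝ} {d : ℝ}
    (hA : ∀ i u, ∑ v, |A i u v| ≤ d) (p : ℕ) (S : Finset ι) (u : V) :
    ∑ v, |walshCoeff A p S u v| ≤ d ^ p * walshCoeff (fun _ : ι => (1 : ℝ)) p S := by
  induction p generalizing S u with
  | zero =>
    have hzero : walshCoeff A 0 S = (∑ b, walsh S b) • 1 := by
      simp only [walshCoeff, pow_zero, sum_smul]
    rw [hzero]
    simp [walshCoeff, Matrix.one_apply, apply_ite abs, abs_of_nonneg (sum_walsh_nonneg S)]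
  | succ p ih =>
    have hcoeff_nonneg (T : Finset ι) : 0 ≤ d ^ p * walshCoeff (fun _ : ι => (1 : ℝ)) p T :=
      (sum_nonneg fun _ _ => abs_nonneg _).trans (ih T u)
    calc ∑ v, |walshCoeff A (p + 1) S u v|
        ≤ ∑ v, ∑ i, ∑ w, |A i u w| * |walshCoeff A p (S ∆ {i}) w v| := by
          refine sum_le_sum fun v _ => ?_
          rw [walshCoeff_succ, Matrix.sum_apply]
          refine (abs_sum_le_sum_abs _ _).trans (sum_le_sum fun i _ => ?_)
          simp only [Matrix.mul_apply, ← abs_mul]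
          exact abs_sum_le_sum_abs _ _
      _ = ∑ i, ∑ w, |A i u w| * ∑ v, |walshCoeff A p (S ∆ {i}) w v| := by
          rw [sum_comm]
          simp only [mul_sum]
          exact sum_congr rfl fun i _ => sum_comm
      _ ≤ ∑ i, d * (d ^ p * walshCoeff (fun _ : ι => (1 : ℝ)) p (S ∆ {i})) := by
          refine sum_le_sum fun i _ => ?_
          calc ∑ w, |A i u w| * ∑ v, |walshCoeff A p (S ∆ {i}) w v|
              ≤ ∑ w, |A i u w| * (d ^ p * walshCoeff (fun _ : ι => (1 : ℝ)) p (S ∆ {i})) := by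
                gcongr with w
                exact ih _ w
            _ ≤ d * (d ^ p * walshCoeff (fun _ : ι => (1 : ℝ)) p (S ∆ {i})) := by
                rw [← sum_mul]
                exact mul_le_mul_of_nonneg_right (hA i u) (hcoeff_nonneg _)
      _ = d ^ (p + 1) * walshCoeff (fun _ : ι => (1 : ℝ)) (p + 1) S := by
          rw [walshCoeff_succ, mul_sum]
          exact sum_congr rfl fun i _ => by ring

lemma expect_trace_signedSum_pow_le {A : ι → Matrix V V ℝ} {d : ℝ}
    (hA : ∀ i u, ∑ v, |A i u v| ≤ d) (p : ℕ) :
    𝔼 b : ι → Bool, (signedSum A b ^ p).trace ≤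
      Fintype.card V * (d ^ p * 𝔼 b : ι → Bool, (∑ i, pmo (b i)) ^ p) := by
  have hmatrix : ∑ b : ι → Bool, signedSum A b ^ p = walshCoeff A p ∅ := by
    simp [walshCoeff, walsh]
  have hscalar : ∑ b : ι → Bool, (∑ i, pmo (b i)) ^ p = walshCoeff (fun _ : ι => (1 : ℝ)) p ∅ := by
    simp [walshCoeff, walsh, signedSum]
  have htrace : (walshCoeff A p ∅).trace ≤
      Fintype.card V * (d ^ p * walshCoeff (fun _ : ι => (1 : ℝ)) p ∅) :=
    calc (walshCoeff A p ∅).trace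
        ≤ ∑ u, ∑ v, |walshCoeff A p ∅ u v| := sum_le_sum fun u _ =>
          (le_abs_self _).trans
            (single_le_sum (f := fun v => |walshCoeff A p ∅ u v|) (fun _ _ => abs_nonneg _)
              (mem_univ u))
      _ ≤ ∑ _u : V, d ^ p * walshCoeff (fun _ : ι => (1 : ℝ)) p ∅ :=
          sum_le_sum fun u _ => sum_abs_walshCoeff_le hA p ∅ u
      _ = Fintype.card V * (d ^ p * walshCoeff (fun _ : ι => (1 : ℝ)) p ∅) := by
          rw [sum_const, nsmul_eq_mul, card_univ]
  rw [Fintype.expect_eq_sum_div_card, Fintype.expect_eq_sum_div_card, ← Matrix.trace_sum, hmatrix,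
    hscalar, mul_div_assoc', mul_div_assoc']
  gcongr

end Walsh

/-! ### Exponential moments of signed sums of matrices -/

lemma trace_pow_eq_sum_eigenvalues_pow {𝕜 V : Type*} [RCLike 𝕜] [Fintype V] {M : Matrix V V 𝕜}
    (hM : M.IsHermitian) (p : ℕ) : (M ^ p).trace = ∑ j, (hM.eigenvalues j : 𝕜) ^ p := by
  conv_lhs => rw [hM.spectral_theorem, ← map_pow, Unitary.conjStarAlgAut_apply,
    Matrix.trace_mul_cycle, Unitary.coe_star_mul_self, one_mul, Matrix.diagonal_pow]
  simp [Matrix.trace_diagonal]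

lemma hasSum_mul_sum_pow {β : Type*} [Fintype β] (s : ℝ) (f : β → ℝ) :
    HasSum (fun p : ℕ => s ^ p / p.factorial * ∑ j, f j ^ p) (∑ j, Real.exp (s * f j)) := by
  have hexp (j : β) : HasSum (fun p : ℕ => (s * f j) ^ p / p.factorial) (Real.exp (s * f j)) := by
    rw [Real.exp_eq_exp_ℝ]
    exact NormedSpace.expSeries_div_hasSum_exp (s * f j)
  simpa only [mul_sum, mul_pow, mul_div_right_comm] using hasSum_sum fun j (_ : j ∈ univ) => hexp j

lemma exp_dotProduct_mulVec_le_sum_exp_eigenvalues {V : Type*} [Fintype V] {M : Matrix V V ℝ}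
    (hM : M.IsHermitian) {x : V → ℝ} (hx : x ⬝ᵥ x = 1) (s : ℝ) :
    Real.exp (s * (x ⬝ᵥ M *ᵥ x)) ≤ ∑ j, Real.exp (s * hM.eigenvalues j) := by
  set U : Matrix V V ℝ := hM.eigenvectorUnitary.1
  have hUU : U * Uᵀ = 1 := Unitary.coe_mul_star_self hM.eigenvectorUnitary
  have hM_eq : M = U * Matrix.diagonal hM.eigenvalues * Uᵀ := by
    conv_lhs => rw [hM.spectral_theorem, Unitary.conjStarAlgAut_apply]
    rfl
  set y : V → ℝ := x ᵥ* U with hy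
  have hweights : ∑ j, y j ^ 2 = 1 := by
    have : y ⬝ᵥ y = 1 := by
      rw [hy, ← Matrix.dotProduct_mulVec, ← Matrix.mulVec_transpose, Matrix.mulVec_mulVec, hUU,
        Matrix.one_mulVec, hx]
    simpa only [dotProduct, sq] using this
  have hform : s * (x ⬝ᵥ M *ᵥ x) = ∑ j, y j ^ 2 * (s * hM.eigenvalues j) := by
    have : x ⬝ᵥ M *ᵥ x = ∑ j, y j * (hM.eigenvalues j * y j) := by
      conv_lhs => rw [hM_eq, ← Matrix.mulVec_mulVec, Matrix.mulVec_transpose, ← hy,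
        ← Matrix.mulVec_mulVec, Matrix.dotProduct_mulVec, ← hy]
      simp [dotProduct, Matrix.mulVec_diagonal]
    rw [this, mul_sum]
    exact sum_congr rfl fun j _ => by ring
  calc Real.exp (s * (x ⬝ᵥ M *ᵥ x))
      ≤ ∑ j, y j ^ 2 * Real.exp (s * hM.eigenvalues j) := by
        rw [hform]
        exact convexOn_exp.map_sum_le (fun j _ => sq_nonneg _) hweights fun j _ => Set.mem_univ _
    _ ≤ ∑ j, Real.exp (s * hM.eigenvalues j) := by
        refine sum_le_sum fun j _ => mul_le_of_le_one_left (Real.exp_nonneg _) ?_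
        rw [← hweights]
        exact single_le_sum (f := fun j => y j ^ 2) (fun j _ => sq_nonneg _) (mem_univ j)

section ExponentialMoments

variable {ι V : Type*} [Fintype ι]

lemma expect_exp_sum_pmo_le (s : ℝ) :
    𝔼 b : ι → Bool, Real.exp (s * ∑ i, pmo (b i)) ≤ Real.exp (Fintype.card ι * (s ^ 2 / 2)) :=
  calc 𝔼 b : ι → Bool, Real.exp (s * ∑ i, pmo (b i))
      = Real.cosh s ^ Fintype.card ι := by
        simp only [mul_sum, Real.exp_sum]
        rw [Fintype.expect_eq_sum_div_card,
          ← Fintype.prod_sum fun (_ : ι) β => Real.exp (s * pmo β)]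
        simp [pmo, Real.cosh_eq, div_pow]
    _ ≤ Real.exp (s ^ 2 / 2) ^ Fintype.card ι := by
        gcongr
        exact Real.cosh_le_exp_half_sq s
    _ = Real.exp (Fintype.card ι * (s ^ 2 / 2)) := (Real.exp_nat_mul _ _).symm

lemma isHermitian_signedSum {A : ι → Matrix V V ℝ} (hsymm : ∀ i, (A i).IsHermitian)
    (b : ι → Bool) : (signedSum A b).IsHermitian :=
  isSelfAdjoint_sum _ fun i _ => (IsSelfAdjoint.all (pmo (b i))).smul (hsymm i)

variable [Fintype V]

lemma expect_sum_exp_eigenvalues_le {A : ι → Matrix V V ℝ} {d : ℝ}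
    (hsymm : ∀ i, (A i).IsHermitian) (hA : ∀ i u, ∑ v, |A i u v| ≤ d) {s : ℝ} (hs : 0 ≤ s) :
    𝔼 b, ∑ j, Real.exp (s * (isHermitian_signedSum hsymm b).eigenvalues j) ≤
      Fintype.card V * Real.exp (Fintype.card ι * ((s * d) ^ 2 / 2)) := by
  have hmatrix : HasSum (fun p : ℕ => s ^ p / p.factorial * 𝔼 b, (signedSum A b ^ p).trace)
      (𝔼 b, ∑ j, Real.exp (s * (isHermitian_signedSum hsymm b).eigenvalues j)) := by
    have hsum := (hasSum_sum (s := univ) fun b _ =>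
      hasSum_mul_sum_pow s (isHermitian_signedSum hsymm b).eigenvalues).div_const
        (Fintype.card (ι → Bool) : ℝ)
    simp only [Fintype.expect_eq_sum_div_card,
      trace_pow_eq_sum_eigenvalues_pow (isHermitian_signedSum hsymm _), RCLike.ofReal_real_eq_id,
      id_eq]
    exact hsum.congr_fun fun p => by rw [mul_div_assoc', mul_sum]
  have hscalar : HasSum
      (fun p : ℕ => s ^ p / p.factorial *
        (Fintype.card V * (d ^ p * 𝔼 b : ι → Bool, (∑ i, pmo (b i)) ^ p)))
      (Fintype.card V * 𝔼 b : ι → Bool, Real.exp (s * d * ∑ i, pmo (b i))) := by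
    have hsum := ((hasSum_mul_sum_pow (s * d) fun b : ι → Bool => ∑ i, pmo (b i)).div_const
      (Fintype.card (ι → Bool) : ℝ)).mul_left (Fintype.card V : ℝ)
    simp only [Fintype.expect_eq_sum_div_card]
    refine hsum.congr_fun fun p => ?_
    ring
  calc 𝔼 b, ∑ j, Real.exp (s * (isHermitian_signedSum hsymm b).eigenvalues j)
      ≤ Fintype.card V * 𝔼 b : ι → Bool, Real.exp (s * d * ∑ i, pmo (b i)) :=
        hasSum_le (fun p => mul_le_mul_of_nonneg_left (expect_trace_signedSum_pow_le hA p)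
          (by positivity)) hmatrix hscalar
    _ ≤ Fintype.card V * Real.exp (Fintype.card ι * ((s * d) ^ 2 / 2)) := by
        gcongr
        exact expect_exp_sum_pmo_le _

lemma exp_expect_le_expect_exp {β : Type*} [Fintype β] [Nonempty β] (f : β → ℝ) :
    Real.exp (𝔼 j, f j) ≤ 𝔼 j, Real.exp (f j) := by
  have hweights : ∑ _j : β, (Fintype.card β : ℝ)⁻¹ = 1 := by simp
  simpa only [Fintype.expect_eq_sum_div_card, div_eq_inv_mul, mul_sum, smul_eq_mul] using
    convexOn_exp.map_sum_le (fun _ _ => by positivity) hweights fun j _ => Set.mem_univ (f j)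

lemma mul_card_mul_le_of_le_expect {A : ι → Matrix V V ℝ} {d τ : ℝ}
    (hsymm : ∀ i, (A i).IsHermitian) (hA : ∀ i u, ∑ v, |A i u v| ≤ d)
    {x : (ι → Bool) → V → ℝ} (hx : ∀ b, x b ⬝ᵥ x b = 1)
    (hcorr : ∀ i, τ ≤ 𝔼 b, pmo (b i) * (x b ⬝ᵥ A i *ᵥ x b)) {s : ℝ} (hs : 0 ≤ s) :
    s * (Fintype.card ι * τ) ≤
      Real.log (Fintype.card V) + Fintype.card ι * ((s * d) ^ 2 / 2) := by
  have hV : (0 : ℝ) < Fintype.card V := by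
    have : Nonempty V := by
      by_contra! hempty
      simpa using hx fun _ => true
    exact_mod_cast Fintype.card_pos
  have hform (b : ι → Bool) :
      x b ⬝ᵥ signedSum A b *ᵥ x b = ∑ i, pmo (b i) * (x b ⬝ᵥ A i *ᵥ x b) := by
    simp only [signedSum, Matrix.sum_mulVec, dotProduct_sum, Matrix.smul_mulVec, dotProduct_smul,
      smul_eq_mul]
  have hmean : Fintype.card ι * τ ≤ 𝔼 b, x b ⬝ᵥ signedSum A b *ᵥ x b := by
    simp only [hform, expect_sum_comm]
    simpa using card_nsmul_le_sum univ _ τ fun i _ => hcorr i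
  rw [← Real.exp_le_exp, Real.exp_add, Real.exp_log hV]
  calc Real.exp (s * (Fintype.card ι * τ))
      ≤ Real.exp (𝔼 b, s * (x b ⬝ᵥ signedSum A b *ᵥ x b)) := by
        rw [← mul_expect]
        gcongr
    _ ≤ 𝔼 b, Real.exp (s * (x b ⬝ᵥ signedSum A b *ᵥ x b)) := exp_expect_le_expect_exp _
    _ ≤ 𝔼 b, ∑ j, Real.exp (s * (isHermitian_signedSum hsymm b).eigenvalues j) :=
        expect_le_expect fun b _ => exp_dotProduct_mulVec_le_sum_exp_eigenvalues _ (hx b) s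
    _ ≤ Fintype.card V * Real.exp (Fintype.card ι * ((s * d) ^ 2 / 2)) :=
        expect_sum_exp_eigenvalues_le hsymm hA hs

theorem card_mul_sq_le_of_le_expect {A : ι → Matrix V V ℝ} {d τ : ℝ}
    (hsymm : ∀ i, (A i).IsHermitian) (hA : ∀ i u, ∑ v, |A i u v| ≤ d)
    {x : (ι → Bool) → V → ℝ} (hx : ∀ b, x b ⬝ᵥ x b = 1) (hτ : 0 ≤ τ)
    (hcorr : ∀ i, τ ≤ 𝔼 b, pmo (b i) * (x b ⬝ᵥ A i *ᵥ x b)) :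
    Fintype.card ι * τ ^ 2 ≤ 2 * d ^ 2 * Real.log (Fintype.card V) := by
  have hlog : 0 ≤ Real.log (Fintype.card V) := Real.log_natCast_nonneg _
  have hdiscrim := discrim_le_zero (a := Fintype.card ι * d ^ 2 / 2) (b := -(Fintype.card ι * τ))
    (c := Real.log (Fintype.card V)) fun s => by
      rcases le_total 0 s with hs | hs
      · linarith [mul_card_mul_le_of_le_expect hsymm hA hx hcorr hs]
      · have hlinear : 0 ≤ -(Fintype.card ι * τ) * s :=
          mul_nonneg_of_nonpos_of_nonpos (neg_nonpos.mpr (by positivity)) hs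
        have hsquare : 0 ≤ Fintype.card ι * d ^ 2 / 2 * (s * s) :=
          mul_nonneg (by positivity) (mul_self_nonneg s)
        linarith
  rcases isEmpty_or_nonempty ι with hι | hι
  · rw [Fintype.card_eq_zero, Nat.cast_zero, zero_mul]
    positivity
  · have hk : (0 : ℝ) < Fintype.card ι := by exact_mod_cast Fintype.card_pos
    refine le_of_mul_le_mul_left ?_ hk
    rw [discrim] at hdiscrim
    linarith

end ExponentialMoments

/-! ### Binomial coefficients -/

lemma mul_le_sq_of_antitoneOn_ratio {g ρ : ℕ → ℝ} {r : ℕ} (hg : ∀ t, 0 ≤ g t) (hρ : ∀ t, 0 ≤ ρ t)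
    (hratio : ∀ t, g (t + 1) = g t * ρ t) (hanti : AntitoneOn ρ (Set.Iio (2 * r))) :
    g 0 * g (2 * r) ≤ g r ^ 2 := by
  have htelescope (s t : ℕ) : g (s + t) = g s * ∏ j ∈ range t, ρ (s + j) := by
    induction t with
    | zero => simp
    | succ t ih => rw [← add_assoc, hratio, ih, prod_range_succ, mul_assoc]
  have hprod : ∏ j ∈ range r, ρ (r + j) ≤ ∏ j ∈ range r, ρ (0 + j) :=
    prod_le_prod (fun j _ => hρ _) fun j hj => by
      have hj' := mem_range.mp hj
      exact hanti (by simp; omega) (by simp; omega) (by omega)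
  calc g 0 * g (2 * r) = g r * (g 0 * ∏ j ∈ range r, ρ (r + j)) := by
        rw [two_mul, htelescope]
        ring
    _ ≤ g r * (g 0 * ∏ j ∈ range r, ρ (0 + j)) := by
        have := hg 0
        have := hg r
        gcongr
    _ = g r ^ 2 := by rw [← htelescope, zero_add, sq]

lemma choose_add_two_mul (a b : ℕ) :
    (a + b + 2).choose (a + 1) * ((a + 1) * (b + 1)) =
      (a + b).choose a * ((a + b + 1) * (a + b + 2)) := by
  have hlower : (a + b).choose a * (a + b + 1) = (a + b + 1).choose a * (b + 1) := by
    rw [Nat.choose_mul_succ_eq, show a + b + 1 - a = b + 1 by omega]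
  calc (a + b + 2).choose (a + 1) * ((a + 1) * (b + 1))
      = (a + b + 1 + 1) * (a + b + 1).choose a * (b + 1) := by
        rw [Nat.add_one_mul_choose_eq (a + b + 1) a]
        ring
    _ = (a + b).choose a * ((a + b + 1) * (a + b + 2)) := by
        rw [mul_assoc, ← hlower]
        ring

lemma choose_add_two_mul_succ (a b t : ℕ) :
    ((a + b + 2 * (t + 1)).choose (a + (t + 1)) : ℝ) =
      (a + b + 2 * t).choose (a + t) *
        (((a + b + 2 * t + 1) * (a + b + 2 * t + 2)) / ((a + t + 1) * (b + t + 1))) := by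
  have hnat := choose_add_two_mul (a + t) (b + t)
  rw [show a + t + (b + t) = a + b + 2 * t by ring] at hnat
  rw [mul_div_assoc', eq_div_iff (by positivity)]
  exact_mod_cast hnat

lemma choose_ratio_succ_le {a b : ℝ} (ha : 1 ≤ a) (hab : 3 * a ≤ b) :
    ((a + b + 1) * (a + b + 2)) / ((a + 1) * (b + 1)) ≤ ((a + b - 1) * (a + b)) / (a * b) := by
  rw [div_le_div_iff₀ (by nlinarith) (by nlinarith)]
  have hgap : 0 ≤ (b - 3 * a) * (3 * b - a) := mul_nonneg (by linarith) (by linarith)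
  nlinarith [mul_nonneg hgap (by linarith : 0 ≤ 4 * (a + b) + 2),
    mul_nonneg (by linarith : 0 ≤ a + b - 4) (by linarith : 0 ≤ a + b)]

-- Log-concavity of `t ↦ (a + b + 2 t).choose (a + t)`, where `a = l - 2 r` and `b = m - l - 2 r`.
lemma choose_mul_choose_le_sq {m l r : ℕ} (hl : 2 * r ≤ l) (hm : 4 * l ≤ m) :
    ((m - 4 * r).choose (l - 2 * r) * m.choose l : ℝ) ≤ (m - 2 * r).choose (l - r) ^ 2 := by
  obtain ⟨a, rfl⟩ := Nat.exists_eq_add_of_le' hl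
  obtain ⟨b, rfl⟩ : ∃ b, m = a + b + 2 * (2 * r) := ⟨m - a - 4 * r, by omega⟩
  set ρ : ℕ → ℝ := fun t =>
    ((a + b + 2 * t + 1) * (a + b + 2 * t + 2)) / ((a + t + 1) * (b + t + 1))
  have hanti : AntitoneOn ρ (Set.Iio (2 * r)) := by
    refine antitoneOn_of_succ_le Set.ordConnected_Iio fun t _ _ ht => ?_
    have hlt : t + 1 < 2 * r := ht
    have hle : (3 * (a + t + 1) : ℝ) ≤ b + t + 1 := by
      exact_mod_cast (by omega : 3 * (a + t + 1) ≤ b + t + 1)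
    have hpos : (1 : ℝ) ≤ a + t + 1 := by exact_mod_cast (by omega : 1 ≤ a + t + 1)
    refine le_of_eq_of_le ?_ ((choose_ratio_succ_le hpos hle).trans_eq ?_) <;>
      simp only [ρ, Order.succ_eq_add_one, Nat.cast_add_one] <;> congr 1 <;> ring
  have hconcave := mul_le_sq_of_antitoneOn_ratio
    (g := fun t => ((a + b + 2 * t).choose (a + t) : ℝ)) (fun _ => Nat.cast_nonneg _)
    (fun t => by positivity) (choose_add_two_mul_succ a b) hanti
  convert hconcave using 4 <;> omega

lemma two_pow_le_centralBinom (r : ℕ) : 2 ^ r ≤ r.centralBinom := by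
  induction r with
  | zero => simp
  | succ r ih =>
    refine Nat.le_of_mul_le_mul_left ?_ r.succ_pos
    calc (r + 1) * 2 ^ (r + 1) = 2 * (r + 1) * 2 ^ r := by ring
      _ ≤ 2 * (2 * r + 1) * r.centralBinom := by gcongr; omega
      _ = (r + 1) * (r + 1).centralBinom := (Nat.succ_mul_centralBinom_succ r).symm

lemma choose_add_two_mul_le {a b m : ℕ} (ha : 0 < a) (hab : a ≤ b) (t : ℕ)
    (hm : a + b + 2 * t ≤ m) :
    ((a + b + 2 * t).choose (a + t) : ℝ) ≤ (2 * m / a) ^ t * (a + b).choose a := by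
  induction t with
  | zero => simp
  | succ t ih =>
    have ha' : (0 : ℝ) < a := by exact_mod_cast ha
    have hm' : (a + b + 2 * t + 2 : ℝ) ≤ m := by exact_mod_cast (by omega : a + b + 2 * t + 2 ≤ m)
    have hb : (a + b + 2 * t + 1 : ℝ) ≤ 2 * (b + t + 1) := by
      exact_mod_cast (by omega : a + b + 2 * t + 1 ≤ 2 * (b + t + 1))
    have hratio : ((a + b + 2 * t + 1) * (a + b + 2 * t + 2) : ℝ) / ((a + t + 1) * (b + t + 1)) ≤
        2 * m / a := by
      rw [div_le_div_iff₀ (by positivity) ha']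
      calc ((a + b + 2 * t + 1) * (a + b + 2 * t + 2) * a : ℝ)
          ≤ (2 * (b + t + 1)) * m * (a + t + 1) := by
            gcongr
            linarith [(Nat.cast_nonneg t : (0 : ℝ) ≤ t)]
        _ = 2 * m * ((a + t + 1) * (b + t + 1)) := by ring
    rw [choose_add_two_mul_succ, pow_succ, mul_right_comm]
    gcongr
    exact ih (by omega)

lemma choose_le_two_mul_div_pow_mul_choose {m l r : ℕ} (hl : r < l) (hm : 2 * l ≤ m) :
    (m.choose l : ℝ) ≤ (2 * m / (l - r : ℕ)) ^ r * (m - 2 * r).choose (l - r) := by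
  have hbound := choose_add_two_mul_le (a := l - r) (b := m - l - r) (m := m) (by omega) (by omega)
    r (by omega)
  convert hbound using 5 <;> omega

lemma choose_le_mul_centralBinom_mul_choose {m l r : ℕ} (hl : r < l) (hm : 2 * l ≤ m)
    (hpow : (m : ℝ) ^ r ≤ (l - r : ℕ) ^ r * m) :
    (m.choose l : ℝ) ≤ m * (r.centralBinom * (m - 2 * r).choose (l - r)) := by
  have hpos : (0 : ℝ) < (l - r : ℕ) := by exact_mod_cast Nat.sub_pos_of_lt hl
  have hcentral : (2 : ℝ) ^ r ≤ r.centralBinom := by exact_mod_cast two_pow_le_centralBinom r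
  calc (m.choose l : ℝ) ≤ (2 * m / (l - r : ℕ)) ^ r * (m - 2 * r).choose (l - r) :=
        choose_le_two_mul_div_pow_mul_choose hl hm
    _ = 2 ^ r * (m ^ r / (l - r : ℕ) ^ r) * (m - 2 * r).choose (l - r) := by
        rw [div_pow, mul_pow, mul_div_assoc]
    _ ≤ r.centralBinom * m * (m - 2 * r).choose (l - r) := by
        gcongr
        rwa [div_le_iff₀' (by positivity)]
    _ = m * (r.centralBinom * (m - 2 * r).choose (l - r)) := by ring

/-! ### Kikuchi matrices -/

section Kikuchi

open scoped FinsetFamily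

variable {α : Type*}

lemma union_inter_of_subset_of_disjoint {A B X Y : Finset α} (hX : X ⊆ A) (hY : Y ⊆ B)
    (hAB : Disjoint A B) : (X ∪ Y) ∩ A = X := by
  rw [union_inter_distrib_right, inter_eq_left.mpr hX,
    disjoint_iff_inter_eq_empty.mp (hAB.symm.mono_left hY), union_empty]

lemma card_sups_of_disjoint {A B : Finset α} {𝒜 ℬ : Finset (Finset α)} (h𝒜 : ∀ X ∈ 𝒜, X ⊆ A)
    (hℬ : ∀ Y ∈ ℬ, Y ⊆ B) (hAB : Disjoint A B) : #(𝒜 ⊻ ℬ) = #𝒜 * #ℬ := by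
  refine (card_sups_iff 𝒜 ℬ).mpr ?_
  rintro ⟨X, Y⟩ hXY ⟨X', Y'⟩ hXY' (h : X ∪ Y = X' ∪ Y')
  have hX := h𝒜 X hXY.1
  have hY := hℬ Y hXY.2
  have hX' := h𝒜 X' hXY'.1
  have hY' := hℬ Y' hXY'.2
  rw [Prod.mk.injEq]
  constructor
  · rw [← union_inter_of_subset_of_disjoint hX hY hAB, h,
      union_inter_of_subset_of_disjoint hX' hY' hAB]
  · rw [← union_inter_of_subset_of_disjoint hY hX hAB.symm, union_comm, h, union_comm,
      union_inter_of_subset_of_disjoint hY' hX' hAB.symm]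

lemma filter_powersetCard_union_eq_sups {A B : Finset α} (hAB : Disjoint A B) {l r : ℕ}
    (hr : r ≤ l) (P : Finset α → Prop) [DecidablePred P] :
    {S ∈ powersetCard l (A ∪ B) | #(S ∩ A) = r ∧ P (S ∩ B)} =
      powersetCard r A ⊻ {T ∈ powersetCard (l - r) B | P T} := by
  ext S
  simp only [mem_filter, mem_powersetCard, mem_sups]
  constructor
  · rintro ⟨⟨hS, hl⟩, hSA, hP⟩
    have hsplit : S ∩ A ∪ S ∩ B = S := by rw [← inter_union_distrib_left, inter_eq_left.mpr hS]
    have hcard : #(S ∩ A) + #(S ∩ B) = l := by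
      rw [← card_union_of_disjoint (hAB.mono inter_subset_right inter_subset_right), hsplit, hl]
    exact ⟨S ∩ A, ⟨inter_subset_right, hSA⟩, S ∩ B, ⟨⟨inter_subset_right, by omega⟩, hP⟩, hsplit⟩
  · rintro ⟨X, ⟨hX, hXr⟩, Y, ⟨⟨hY, hYl⟩, hP⟩, rfl⟩
    rw [sup_eq_union]
    refine ⟨⟨union_subset_union hX hY, ?_⟩, ?_, ?_⟩
    · rw [card_union_of_disjoint (hAB.mono hX hY)]
      omega
    · rw [union_inter_of_subset_of_disjoint hX hY hAB, hXr]
    · rwa [union_comm, union_inter_of_subset_of_disjoint hY hX hAB.symm]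

lemma card_filter_powersetCard_union {A B : Finset α} (hAB : Disjoint A B) {l r : ℕ}
    (hr : r ≤ l) (P : Finset α → Prop) [DecidablePred P] :
    #{S ∈ powersetCard l (A ∪ B) | #(S ∩ A) = r ∧ P (S ∩ B)} =
      (#A).choose r * #{T ∈ powersetCard (l - r) B | P T} := by
  rw [filter_powersetCard_union_eq_sups hAB hr, ← card_powersetCard]
  exact card_sups_of_disjoint (fun X hX => (mem_powersetCard.mp hX).1)
    (fun Y hY => (mem_powersetCard.mp (mem_filter.mp hY).1).1) hAB

lemma card_symmDiff_eq_card_iff {r : ℕ} {S C : Finset α} (hC : #C = 2 * r) :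
    #(S ∆ C) = #S ↔ #(S ∩ C) = r := by
  have hS := card_inter_add_card_sdiff S C
  have hC' := card_inter_add_card_sdiff C S
  have hsymm : #(S ∆ C) = #(S \ C) + #(C \ S) := by
    rw [symmDiff_def, sup_eq_union, card_union_of_disjoint disjoint_sdiff_sdiff]
  rw [inter_comm C S] at hC'
  omega

/-- The degree of the vertex `S` in the Kikuchi graph of a `2 r`-uniform hypergraph `H`: the number
of hyperedges halved by `S`. -/
def kikuchiDegree (r : ℕ) (H : Finset (Finset α)) (S : Finset α) : ℕ :=
  #{C ∈ H | #(S ∩ C) = r}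

lemma kikuchiDegree_pos {r : ℕ} {H : Finset (Finset α)} {S C : Finset α} (hC : C ∈ H)
    (hS : #(S ∩ C) = r) : 0 < kikuchiDegree r H S :=
  card_pos.mpr ⟨C, mem_filter.mpr ⟨hC, hS⟩⟩

variable [Fintype α]

lemma card_le_card_of_pairwise_disjoint {H : Finset (Finset α)} (hne : ∀ C ∈ H, C.Nonempty)
    (hd : (H : Set (Finset α)).Pairwise Disjoint) : #H ≤ Fintype.card α :=
  calc #H = ∑ _C ∈ H, 1 := card_eq_sum_ones H
    _ ≤ ∑ C ∈ H, #C := sum_le_sum fun C hC => card_pos.mpr (hne C hC)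
    _ = #(H.biUnion id) := (card_biUnion hd).symm
    _ ≤ Fintype.card α := card_le_univ _

/-- The sets of size `l` meeting `C` in exactly `r` points: for a hyperedge `C` of size `2 r`, these
are the vertices of the level-`l` Kikuchi graph on which `S ↦ S ∆ C` is an edge. -/
def balanced (l r : ℕ) (C : Finset α) : Finset (Finset α) :=
  {S ∈ powersetCard l univ | #(S ∩ C) = r}

variable {l r : ℕ}

lemma mem_balanced {C S : Finset α} : S ∈ balanced l r C ↔ #S = l ∧ #(S ∩ C) = r := by
  simp [balanced]

lemma symmDiff_mem_balanced {S C : Finset α} (hC : #C = 2 * r) (hS : S ∈ balanced l r C) :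
    S ∆ C ∈ balanced l r C := by
  rw [mem_balanced] at hS ⊢
  have hcard := (card_symmDiff_eq_card_iff hC).mpr hS.2
  refine ⟨hcard.trans hS.1, ?_⟩
  rw [← card_symmDiff_eq_card_iff hC, symmDiff_symmDiff_cancel_right, hcard]

lemma card_balanced (hr : r ≤ l) {C : Finset α} (hC : #C = 2 * r) :
    #(balanced l r C) = r.centralBinom * (Fintype.card α - 2 * r).choose (l - r) := by
  have hcard := card_filter_powersetCard_union (disjoint_compl_right (a := C)) hr fun _ => True
  rw [union_compl] at hcard
  simpa [balanced, hC, card_compl, Nat.centralBinom_eq_two_mul_choose] using hcard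

lemma card_balanced_inter_balanced (hr : 2 * r ≤ l) {C C' : Finset α} (hC : #C = 2 * r)
    (hC' : #C' = 2 * r) (hd : Disjoint C C') :
    #(balanced l r C ∩ balanced l r C') =
      r.centralBinom ^ 2 * (Fintype.card α - 4 * r).choose (l - 2 * r) := by
  have hsub : C' ⊆ Cᶜ := subset_compl_iff_disjoint_left.mpr hd
  have houter := card_filter_powersetCard_union (disjoint_compl_right (a := C))
    (by omega : r ≤ l) fun T => #(T ∩ C') = r
  have hinner := card_filter_powersetCard_union (disjoint_sdiff (s := C') (t := Cᶜ))
    (by omega : r ≤ l - r) fun _ => True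
  rw [union_sdiff_of_subset hsub] at hinner
  simp only [and_true, filter_true, card_powersetCard] at hinner
  rw [union_compl, hinner] at houter
  simp only [inter_assoc, inter_eq_right.mpr hsub] at houter
  rw [balanced, balanced, ← filter_and, houter, card_sdiff_of_subset hsub, card_compl, hC, hC',
    Nat.centralBinom_eq_two_mul_choose, sq, mul_assoc, Nat.sub_sub, Nat.sub_sub, ← two_mul,
    ← two_mul, show 2 * (2 * r) = 4 * r by ring]

lemma sum_kikuchiDegree (l r : ℕ) (H : Finset (Finset α)) (C : Finset α) :
    ∑ S ∈ balanced l r C, kikuchiDegree r H S =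
      ∑ C' ∈ H, #(balanced l r C ∩ balanced l r C') := by
  simp only [kikuchiDegree, card_filter]
  rw [sum_comm]
  refine sum_congr rfl fun C' _ => ?_
  rw [← card_filter]
  congr 1
  ext S
  simp only [mem_filter, mem_inter, mem_balanced]
  tauto

lemma sum_kikuchiDegree_symmDiff (H : Finset (Finset α)) {C : Finset α} (hC : #C = 2 * r) :
    ∑ S ∈ balanced l r C, kikuchiDegree r H (S ∆ C) =
      ∑ S ∈ balanced l r C, kikuchiDegree r H S :=
  sum_nbij' (· ∆ C) (· ∆ C) (fun _ => symmDiff_mem_balanced hC) (fun _ => symmDiff_mem_balanced hC)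
    (by simp) (by simp) (fun _ _ => rfl)

/-- The total weight of the edges `{S, S ∆ C}` of the level-`l` Kikuchi graph of `H` when each edge
is weighted by the inverse of the sum of the degrees of its endpoints. This weighting bounds all
row sums by `1` without discarding vertices of large degree. -/
def edgeMass (l r : ℕ) (H : Finset (Finset α)) (C : Finset α) : ℝ :=
  ∑ S ∈ balanced l r C, ((kikuchiDegree r H S : ℝ) + kikuchiDegree r H (S ∆ C))⁻¹

lemma edgeMass_nonneg (l r : ℕ) (H : Finset (Finset α)) (C : Finset α) : 0 ≤ edgeMass l r H C :=
  sum_nonneg fun _ _ => by positivity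

lemma sq_card_balanced_le {H : Finset (Finset α)} {C : Finset α} (hC : C ∈ H) (hCr : #C = 2 * r) :
    (#(balanced l r C) : ℝ) ^ 2 ≤
      edgeMass l r H C * (2 * ∑ S ∈ balanced l r C, kikuchiDegree r H S : ℕ) := by
  have hcauchy := sum_sq_le_sum_mul_sum_of_sq_le_mul (r := fun _ => (1 : ℝ)) (balanced l r C)
    (f := fun S => ((kikuchiDegree r H S : ℝ) + kikuchiDegree r H (S ∆ C))⁻¹)
    (g := fun S => (kikuchiDegree r H S : ℝ) + kikuchiDegree r H (S ∆ C))
    (fun _ _ => by positivity) (fun _ _ => by positivity) fun S hS => by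
      have := kikuchiDegree_pos hC (mem_balanced.mp hS).2
      field_simp
      exact le_rfl
  have hdegrees : ∑ S ∈ balanced l r C, ((kikuchiDegree r H S : ℝ) + kikuchiDegree r H (S ∆ C)) =
      (2 * ∑ S ∈ balanced l r C, kikuchiDegree r H S : ℕ) := by
    rw [sum_add_distrib, two_mul]
    nth_rw 2 [← sum_kikuchiDegree_symmDiff H hCr]
    push_cast
    rfl
  rwa [hdegrees, sum_const, nsmul_one] at hcauchy

lemma choose_le_mul_card_balanced (hl : r < l) (hm : 2 * l ≤ Fintype.card α)
    (hpow : (Fintype.card α : ℝ) ^ r ≤ (l - r : ℕ) ^ r * Fintype.card α) {C : Finset α}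
    (hC : #C = 2 * r) :
    ((Fintype.card α).choose l : ℝ) ≤ Fintype.card α * #(balanced l r C) := by
  rw [card_balanced hl.le hC, Nat.cast_mul]
  exact choose_le_mul_centralBinom_mul_choose hl hm hpow

section Matching

variable {H : Finset (Finset α)} (hH : ∀ C ∈ H, #C = 2 * r)
  (hd : (H : Set (Finset α)).Pairwise Disjoint)

include hH hd in
lemma sum_kikuchiDegree_le (hr : 2 * r ≤ l) {C : Finset α} (hC : C ∈ H) :
    ∑ S ∈ balanced l r C, kikuchiDegree r H S ≤ #(balanced l r C) +
      #H * (r.centralBinom ^ 2 * (Fintype.card α - 4 * r).choose (l - 2 * r)) := by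
  rw [sum_kikuchiDegree, ← add_sum_erase H _ hC, inter_self]
  gcongr
  calc ∑ C' ∈ H.erase C, #(balanced l r C ∩ balanced l r C')
      = #(H.erase C) * (r.centralBinom ^ 2 * (Fintype.card α - 4 * r).choose (l - 2 * r)) := by
        rw [← smul_eq_mul, ← sum_const]
        refine sum_congr rfl fun C' hC' => ?_
        obtain ⟨hne, hmem⟩ := mem_erase.mp hC'
        exact card_balanced_inter_balanced hr (hH C hC) (hH C' hmem) (hd hC hmem hne.symm)
    _ ≤ _ := by
        gcongr
        exact erase_subset C H

include hH hd in
lemma choose_mul_sum_kikuchiDegree_le (hr : 0 < r) (hl : 2 * r ≤ l)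
    (hm : 4 * l ≤ Fintype.card α)
    (hpow : (Fintype.card α : ℝ) ^ r ≤ (l - r : ℕ) ^ r * Fintype.card α) {C : Finset α}
    (hC : C ∈ H) :
    (Fintype.card α).choose l * ((∑ S ∈ balanced l r C, kikuchiDegree r H S : ℕ) : ℝ) ≤
      2 * Fintype.card α * (#(balanced l r C) : ℝ) ^ 2 := by
  have hsum : ((∑ S ∈ balanced l r C, kikuchiDegree r H S : ℕ) : ℝ) ≤ #(balanced l r C) +
      #H * (r.centralBinom ^ 2 * (Fintype.card α - 4 * r).choose (l - 2 * r)) := by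
    exact_mod_cast sum_kikuchiDegree_le hH hd hl hC
  have hchoose := choose_le_mul_card_balanced (by omega) (by omega) hpow (hH C hC)
  have hpairs : (r.centralBinom ^ 2 * (Fintype.card α - 4 * r).choose (l - 2 * r)) *
      ((Fintype.card α).choose l : ℝ) ≤ (#(balanced l r C) : ℝ) ^ 2 := by
    rw [card_balanced (by omega) (hH C hC), Nat.cast_mul, mul_pow, mul_assoc]
    gcongr
    exact choose_mul_choose_le_sq hl hm
  have hcard : (#H : ℝ) ≤ Fintype.card α := by
    exact_mod_cast card_le_card_of_pairwise_disjoint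
      (fun C hC => card_pos.mp (by have := hH C hC; omega)) hd
  set m : ℝ := (Fintype.card α : ℝ)
  set N := ((Fintype.card α).choose l : ℝ)
  set D := (#(balanced l r C) : ℝ)
  set P : ℝ := r.centralBinom ^ 2 * (Fintype.card α - 4 * r).choose (l - 2 * r)
  calc N * _ ≤ N * (D + #H * P) := by gcongr
    _ = N * D + #H * (P * N) := by ring
    _ ≤ m * D * D + m * D ^ 2 := by gcongr
    _ = 2 * m * D ^ 2 := by ring

include hH hd in
lemma choose_le_mul_edgeMass (hr : 0 < r) (hl : 2 * r ≤ l) (hm : 4 * l ≤ Fintype.card α)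
    (hpow : (Fintype.card α : ℝ) ^ r ≤ (l - r : ℕ) ^ r * Fintype.card α) {C : Finset α}
    (hC : C ∈ H) :
    ((Fintype.card α).choose l : ℝ) ≤ 4 * Fintype.card α * edgeMass l r H C := by
  have hcauchy : (#(balanced l r C) : ℝ) ^ 2 ≤
      edgeMass l r H C * (2 * (∑ S ∈ balanced l r C, kikuchiDegree r H S : ℕ)) := by
    exact_mod_cast sq_card_balanced_le hC (hH C hC)
  have hdegrees := choose_mul_sum_kikuchiDegree_le hH hd hr hl hm hpow hC
  have hN_pos : (0 : ℝ) < (Fintype.card α).choose l := by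
    exact_mod_cast Nat.choose_pos (by omega)
  have hD_pos : (0 : ℝ) < #(balanced l r C) :=
    pos_of_mul_pos_right (hN_pos.trans_le
      (choose_le_mul_card_balanced (by omega) (by omega) hpow (hH C hC))) (Nat.cast_nonneg _)
  have hE := edgeMass_nonneg l r H C
  refine le_of_mul_le_mul_right ?_ (pow_pos hD_pos 2)
  set N := ((Fintype.card α).choose l : ℝ)
  set D := (#(balanced l r C) : ℝ)
  set E := edgeMass l r H C
  calc N * D ^ 2 ≤ N * (E * (2 * (∑ S ∈ balanced l r C, kikuchiDegree r H S : ℕ))) := by gcongr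
    _ = 2 * E * (N * (∑ S ∈ balanced l r C, kikuchiDegree r H S : ℕ)) := by ring
    _ ≤ 2 * E * (2 * Fintype.card α * D ^ 2) := by gcongr
    _ = 4 * Fintype.card α * E * D ^ 2 := by ring

end Matching

/-- The level-`l` Kikuchi matrix of the `2 r`-uniform hypergraph `H`, indexed by the sets of size
`l`: the entry at an edge `{S, S ∆ C}` of the Kikuchi graph with `C ∈ H` is `w C`, divided by the
sum of the degrees of the two endpoints. -/
def kikuchiMatrix (l r : ℕ) (H : Finset (Finset α)) (w : Finset α → ℝ) :
    Matrix (powersetCard l (univ : Finset α)) (powersetCard l (univ : Finset α)) ℝ :=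
  fun S T => if S.1 ∆ T.1 ∈ H then
    w (S.1 ∆ T.1) * ((kikuchiDegree r H S : ℝ) + kikuchiDegree r H T)⁻¹ else 0

lemma isHermitian_kikuchiMatrix (l r : ℕ) (H : Finset (Finset α)) (w : Finset α → ℝ) :
    (kikuchiMatrix l r H w).IsHermitian := by
  ext S T
  simp only [Matrix.conjTranspose_apply, star_trivial, kikuchiMatrix, symmDiff_comm T.1 S.1,
    add_comm (kikuchiDegree r H T : ℝ)]

section Uniform

variable {H : Finset (Finset α)} (hH : ∀ C ∈ H, #C = 2 * r)

include hH in
lemma sum_ite_symmDiff_mem {S : Finset α} (hS : #S = l) (f : Finset α → ℝ) :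
    ∑ T ∈ powersetCard l univ, (if S ∆ T ∈ H then f T else 0) =
      ∑ C ∈ H with #(S ∩ C) = r, f (S ∆ C) := by
  rw [← sum_filter]
  refine sum_nbij' (S ∆ ·) (S ∆ ·) (fun T hT => ?_) (fun C hC => ?_) (by simp) (by simp) (by simp)
  · simp only [mem_filter, mem_powersetCard_univ] at hT ⊢
    refine ⟨hT.2, ?_⟩
    rw [← card_symmDiff_eq_card_iff (hH _ hT.2), symmDiff_symmDiff_cancel_left, hT.1, hS]
  · simp only [mem_filter, mem_powersetCard_univ] at hC ⊢
    rw [symmDiff_symmDiff_cancel_left]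
    exact ⟨((card_symmDiff_eq_card_iff (hH C hC.1)).mpr hC.2).trans hS, hC.1⟩

lemma sum_powersetCard_sum_filter (l r : ℕ) (H : Finset (Finset α))
    (f : Finset α → Finset α → ℝ) :
    ∑ S ∈ powersetCard l univ, ∑ C ∈ H with #(S ∩ C) = r, f S C =
      ∑ C ∈ H, ∑ S ∈ balanced l r C, f S C :=
  sum_comm' fun S C => by
    simp only [mem_filter, mem_balanced, mem_powersetCard_univ]
    tauto

include hH in
lemma sum_abs_kikuchiMatrix_le {w : Finset α → ℝ} (hw : ∀ C ∈ H, |w C| ≤ 1)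
    (S : powersetCard l (univ : Finset α)) : ∑ T, |kikuchiMatrix l r H w S T| ≤ 1 := by
  obtain ⟨S, hS⟩ := S
  calc ∑ T, |kikuchiMatrix l r H w ⟨S, hS⟩ T|
      = ∑ T ∈ powersetCard l univ, if S ∆ T ∈ H then
          |w (S ∆ T)| * ((kikuchiDegree r H S : ℝ) + kikuchiDegree r H T)⁻¹ else 0 := by
        rw [← sum_coe_sort (powersetCard l univ)]
        refine sum_congr rfl fun T _ => ?_
        rw [kikuchiMatrix, apply_ite abs, abs_mul, abs_zero]
        congr 2
        exact abs_of_nonneg (by positivity)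
    _ = ∑ C ∈ H with #(S ∩ C) = r,
          |w C| * ((kikuchiDegree r H S : ℝ) + kikuchiDegree r H (S ∆ C))⁻¹ := by
        rw [sum_ite_symmDiff_mem hH (mem_powersetCard_univ.mp hS)]
        simp only [symmDiff_symmDiff_cancel_left]
    _ ≤ ∑ C ∈ H with #(S ∩ C) = r, (kikuchiDegree r H S : ℝ)⁻¹ := by
        refine sum_le_sum fun C hC => ?_
        obtain ⟨hmem, hhalf⟩ := mem_filter.mp hC
        have hpos : (0 : ℝ) < kikuchiDegree r H S := by exact_mod_cast kikuchiDegree_pos hmem hhalf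
        refine (mul_le_of_le_one_left (by positivity) (hw C hmem)).trans ?_
        gcongr
        exact le_add_of_nonneg_right (Nat.cast_nonneg _)
    _ = kikuchiDegree r H S * (kikuchiDegree r H S : ℝ)⁻¹ := by
        rw [sum_const, nsmul_eq_mul, kikuchiDegree]
    _ ≤ 1 := mul_inv_le_one

include hH in
lemma prod_dotProduct_kikuchiMatrix_mulVec (l : ℕ) (w : Finset α → ℝ) {x : α → ℝ}
    (hx : ∀ v, x v * x v = 1) :
    (fun S : powersetCard l (univ : Finset α) => ∏ v ∈ S.1, x v) ⬝ᵥ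
        kikuchiMatrix l r H w *ᵥ (fun S => ∏ v ∈ S.1, x v) =
      ∑ C ∈ H, w C * edgeMass l r H C * ∏ v ∈ C, x v := by
  simp only [dotProduct, Matrix.mulVec, mul_sum]
  calc _ = ∑ S ∈ powersetCard l univ, ∑ T ∈ powersetCard l univ, if S ∆ T ∈ H then
          w (S ∆ T) * ((kikuchiDegree r H S : ℝ) + kikuchiDegree r H T)⁻¹ * ∏ v ∈ S ∆ T, x v
          else 0 := by
        rw [← sum_coe_sort (powersetCard l univ)]
        refine sum_congr rfl fun S _ => ?_
        rw [← sum_coe_sort (powersetCard l univ)]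
        refine sum_congr rfl fun T _ => ?_
        rw [← prod_mul_prod_eq_prod_symmDiff hx, kikuchiMatrix]
        split_ifs <;> ring
    _ = ∑ S ∈ powersetCard l univ, ∑ C ∈ H with #(S ∩ C) = r,
          w C * ((kikuchiDegree r H S : ℝ) + kikuchiDegree r H (S ∆ C))⁻¹ * ∏ v ∈ C, x v := by
        refine sum_congr rfl fun S hS => ?_
        rw [sum_ite_symmDiff_mem hH (mem_powersetCard_univ.mp hS)]
        simp only [symmDiff_symmDiff_cancel_left]
    _ = ∑ C ∈ H, w C * edgeMass l r H C * ∏ v ∈ C, x v := by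
        rw [sum_powersetCard_sum_filter]
        simp only [edgeMass, mul_sum, sum_mul]

end Uniform

/-- The unit vector `S ↦ N^{-1/2} ∏_{v ∈ S} x_v` on the `N` vertices of the level-`l` Kikuchi graph
attached to a point `x` of the cube. -/
def kikuchiVector (l : ℕ) (x : α → ℝ) : powersetCard l (univ : Finset α) → ℝ :=
  (√((Fintype.card α).choose l))⁻¹ • fun S => ∏ v ∈ S.1, x v

lemma kikuchiVector_dotProduct_self (hl : l ≤ Fintype.card α) {x : α → ℝ}
    (hx : ∀ v, x v * x v = 1) : kikuchiVector l x ⬝ᵥ kikuchiVector l x = 1 := by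
  have hN : (0 : ℝ) < (Fintype.card α).choose l := by exact_mod_cast Nat.choose_pos hl
  rw [kikuchiVector, smul_dotProduct, dotProduct_smul, smul_smul, ← mul_inv,
    Real.mul_self_sqrt hN.le, smul_eq_mul]
  simp only [dotProduct, ← prod_mul_distrib, hx, prod_const_one, sum_const, card_univ,
    Fintype.card_coe, card_powersetCard, nsmul_one]
  exact inv_mul_cancel₀ hN.ne'

/-- The weight on the hyperedges of `H` for which they all contribute equally to the quadratic form
of the Kikuchi matrix, scaled to be at most `1`. -/
def equalizingWeight (l r : ℕ) (H : Finset (Finset α)) (C : Finset α) : ℝ :=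
  (Fintype.card α).choose l / (4 * Fintype.card α * edgeMass l r H C)

section Equalized

variable {H : Finset (Finset α)} (hH : ∀ C ∈ H, #C = 2 * r)
  (hd : (H : Set (Finset α)).Pairwise Disjoint)
  (hr : 0 < r) (hl : 2 * r ≤ l) (hm : 4 * l ≤ Fintype.card α)
  (hpow : (Fintype.card α : ℝ) ^ r ≤ (l - r : ℕ) ^ r * Fintype.card α)

include hH hd hr hl hm hpow

lemma abs_equalizingWeight_le_one {C : Finset α} (hC : C ∈ H) :
    |equalizingWeight l r H C| ≤ 1 := by
  have hE := edgeMass_nonneg l r H C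
  rw [equalizingWeight, abs_of_nonneg (by positivity)]
  exact div_le_one_of_le₀ (choose_le_mul_edgeMass hH hd hr hl hm hpow hC) (by positivity)

lemma kikuchiVector_dotProduct_kikuchiMatrix_mulVec {x : α → ℝ} (hx : ∀ v, x v * x v = 1) :
    kikuchiVector l x ⬝ᵥ kikuchiMatrix l r H (equalizingWeight l r H) *ᵥ kikuchiVector l x =
      (4 * Fintype.card α : ℝ)⁻¹ * ∑ C ∈ H, ∏ v ∈ C, x v := by
  have hN : (0 : ℝ) < (Fintype.card α).choose l := by exact_mod_cast Nat.choose_pos (by omega)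
  rw [kikuchiVector, Matrix.mulVec_smul, smul_dotProduct, dotProduct_smul, smul_smul, ← mul_inv,
    Real.mul_self_sqrt hN.le, prod_dotProduct_kikuchiMatrix_mulVec hH l _ hx, smul_eq_mul, mul_sum,
    mul_sum]
  refine sum_congr rfl fun C hC => ?_
  have hmass : 4 * Fintype.card α * edgeMass l r H C ≠ 0 :=
    (hN.trans_le (choose_le_mul_edgeMass hH hd hr hl hm hpow hC)).ne'
  obtain ⟨h4m, hE⟩ := mul_ne_zero_iff.mp hmass
  rw [equalizingWeight]
  field_simp [mul_ne_zero_iff.mp h4m]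

end Equalized

end Kikuchi

/-! ### Choice of the level -/

lemma rpow_one_sub_one_div_pow_mul {x : ℝ} (hx : 0 < x) {r : ℕ} (hr : r ≠ 0) :
    (x ^ (1 - 1 / r : ℝ)) ^ r * x = x ^ r := by
  rw [← Real.rpow_mul_natCast hx.le, sub_mul, one_mul, one_div_mul_cancel (Nat.cast_ne_zero.mpr hr),
    Real.rpow_sub_one hx.ne', Real.rpow_natCast, div_mul_cancel₀ _ hx.ne']

lemma rpow_one_div_mul_rpow_one_sub_one_div {x : ℝ} (hx : 0 < x) (r : ℝ) :
    x ^ (1 / r) * x ^ (1 - 1 / r) = x := by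
  rw [← Real.rpow_add hx, add_sub_cancel, Real.rpow_one]

lemma le_mul_rpow_of_le_pow {x y : ℝ} {r : ℕ} (hr : r ≠ 0) (hx : 0 < x) (hy : 0 ≤ y)
    (hxy : x ≤ y ^ r) : x ≤ y * x ^ (1 - 1 / r : ℝ) := by
  have hroot : x ^ (1 / r : ℝ) ≤ y := by
    rw [one_div, Real.rpow_inv_le_iff_of_pos hx.le hy (by positivity), Real.rpow_natCast]
    exact hxy
  calc x = x ^ (1 / r : ℝ) * x ^ (1 - 1 / r : ℝ) :=
        (rpow_one_div_mul_rpow_one_sub_one_div hx r).symm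
    _ ≤ y * x ^ (1 - 1 / r : ℝ) := by gcongr

lemma mul_rpow_le_of_pow_le {x y : ℝ} {r : ℕ} (hr : r ≠ 0) (hx : 0 < x) (hy : 0 ≤ y)
    (hyx : y ^ r ≤ x) : y * x ^ (1 - 1 / r : ℝ) ≤ x := by
  have hroot : y ≤ x ^ (1 / r : ℝ) := by
    rw [one_div, Real.le_rpow_inv_iff_of_pos hy hx.le (by positivity), Real.rpow_natCast]
    exact hyx
  calc y * x ^ (1 - 1 / r : ℝ) ≤ x ^ (1 / r : ℝ) * x ^ (1 - 1 / r : ℝ) := by gcongr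
    _ = x := rpow_one_div_mul_rpow_one_sub_one_div hx r

lemma natCast_le_rpow_one_sub_one_div {x : ℝ} {r : ℕ} (hr : r ≠ 0) (hx : 2 ^ r ≤ x) :
    (r : ℝ) ≤ x ^ (1 - 1 / r : ℝ) := by
  have hr_one : (1 : ℝ) ≤ r := by exact_mod_cast Nat.one_le_iff_ne_zero.mpr hr
  have hr_le : r ≤ 2 ^ (r - 1) := by
    have := Nat.lt_two_pow_self (n := r - 1)
    omega
  calc (r : ℝ) ≤ 2 ^ (r - 1) := by exact_mod_cast hr_le
    _ = (2 ^ r) ^ (1 - 1 / r : ℝ) := by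
        rw [← Real.rpow_natCast_mul zero_le_two, mul_one_sub,
          mul_one_div_cancel (by positivity), ← Real.rpow_natCast,
          Nat.cast_pred (Nat.pos_of_ne_zero hr)]
    _ ≤ x ^ (1 - 1 / r : ℝ) :=
        Real.rpow_le_rpow (by positivity) hx
          (sub_nonneg.mpr (div_le_one_of_le₀ hr_one (by positivity)))

lemma exists_kikuchi_level {m r : ℕ} (hr : r ≠ 0) (hm : 16 ^ r ≤ m) :
    ∃ l : ℕ, 2 * r ≤ l ∧ 4 * l ≤ m ∧ (m : ℝ) ^ r ≤ (l - r : ℕ) ^ r * m ∧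
      (l : ℝ) ≤ 3 * (m : ℝ) ^ (1 - 1 / r : ℝ) := by
  have hm_pos : (0 : ℝ) < m := by exact_mod_cast (by positivity : 0 < 16 ^ r).trans_le hm
  have hm_pow : (16 : ℝ) ^ r ≤ m := by exact_mod_cast hm
  have hXm := mul_rpow_le_of_pow_le hr hm_pos (by norm_num) hm_pow
  have hXr := rpow_one_sub_one_div_pow_mul hm_pos hr
  have hrX := natCast_le_rpow_one_sub_one_div hr
    ((pow_le_pow_left₀ zero_le_two (by norm_num) r).trans hm_pow)
  set X : ℝ := (m : ℝ) ^ (1 - 1 / r : ℝ)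
  have hr_one : (1 : ℝ) ≤ r := by exact_mod_cast Nat.one_le_iff_ne_zero.mpr hr
  have hceil := Nat.ceil_lt_add_one (by linarith : 0 ≤ X)
  have hr_ceil : r ≤ ⌈X⌉₊ := by exact_mod_cast hrX.trans (Nat.le_ceil X)
  have hl : ((⌈X⌉₊ + r : ℕ) : ℝ) ≤ 3 * X := by
    push_cast
    linarith
  refine ⟨⌈X⌉₊ + r, by omega, ?_, ?_, hl⟩
  · have : (4 * (⌈X⌉₊ + r : ℕ) : ℝ) ≤ m := by linarith
    exact_mod_cast this
  · rw [Nat.add_sub_cancel, ← hXr]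
    gcongr
    exact Nat.le_ceil X

/-! ### Bounds for normal decoders -/

/-- `H` witnesses that `Enc` is `(q, δ, ε)`-normally decodable, over arbitrary finite index types.
The decoding probability `1 / 2 + ε` is expressed as a correlation of at least `2 ε` between the
message bit and its decoded value. -/
structure IsNormalDecoder {ι α : Type*} [Fintype ι] [Fintype α] (q : ℕ) (δ ε : ℝ)
    (Enc : (ι → Bool) → α → Bool) (H : ι → Finset (Finset α)) : Prop where
  card_eq : ∀ i, ∀ C ∈ H i, #C = q
  disjoint : ∀ i, (H i : Set (Finset α)).Pairwise Disjoint
  le_card : ∀ i, δ * Fintype.card α ≤ #(H i)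
  le_correlation : ∀ i, ∀ C ∈ H i,
    2 * ε ≤ 𝔼 b : ι → Bool, pmo (b i) * ∏ v ∈ C, pmo (Enc b v)

lemma two_mul_le_expect_pmo_mul_prod {k n : ℕ} {ε : ℝ} {Enc : (Fin k → Bool) → Fin n → Bool}
    {i : Fin k} {C : Finset (Fin n)}
    (h : 1 / 2 + ε ≤ (#{b | pmo (b i) = ∏ v ∈ C, pmo (Enc b v)} : ℝ) / 2 ^ k) :
    2 * ε ≤ 𝔼 b : Fin k → Bool, pmo (b i) * ∏ v ∈ C, pmo (Enc b v) := by
  have hterm (b : Fin k → Bool) : pmo (b i) * ∏ v ∈ C, pmo (Enc b v) =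
      2 * (if pmo (b i) = ∏ v ∈ C, pmo (Enc b v) then 1 else 0) - 1 := by
    have hsq : (∏ v ∈ C, pmo (Enc b v)) * ∏ v ∈ C, pmo (Enc b v) = 1 := by
      rw [← prod_mul_distrib]
      exact prod_eq_one fun v _ => pmo_mul_self _
    rcases mul_self_eq_one_iff.mp hsq with hb | hb <;> rw [hb] <;> cases b i <;> norm_num [pmo]
  have hcard : (Fintype.card (Fin k → Bool) : ℝ) = 2 ^ k := by simp
  simp only [hterm]
  rw [expect_sub_distrib, ← mul_expect, Fintype.expect_const, Fintype.expect_eq_sum_div_card,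
    sum_boole, hcard]
  linarith

lemma NormallyDecodable.exists_isNormalDecoder {q k n : ℕ} {δ ε : ℝ}
    {Enc : (Fin k → Bool) → Fin n → Bool} (h : NormallyDecodable q k n δ ε Enc) :
    ∃ H, IsNormalDecoder q δ ε Enc H := by
  obtain ⟨H, hmatching, hcard, hdecode⟩ := h
  refine ⟨H, fun i => (hmatching i).1, fun i => (hmatching i).2, by simpa using hcard,
    fun i C hC => ?_⟩
  convert two_mul_le_expect_pmo_mul_prod (hdecode i C hC)

namespace IsNormalDecoder

variable {ι α : Type*} [Fintype ι] [Fintype α] {q r : ℕ} {δ ε : ℝ} {Enc : (ι → Bool) → α → Bool}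
  {H : ι → Finset (Finset α)}

lemma delta_le_one [Nonempty ι] [Nonempty α] (h : IsNormalDecoder q δ ε Enc H) (hq : q ≠ 0) :
    δ ≤ 1 := by
  obtain ⟨i⟩ := ‹Nonempty ι›
  have hcard : (#(H i) : ℝ) ≤ Fintype.card α := by
    exact_mod_cast card_le_card_of_pairwise_disjoint
      (fun C hC => card_pos.mp (by have := h.card_eq i C hC; omega)) (h.disjoint i)
  have hpos : (0 : ℝ) < Fintype.card α := by exact_mod_cast Fintype.card_pos
  exact le_of_mul_le_mul_right (((h.le_card i).trans hcard).trans_eq (one_mul _).symm) hpos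

theorem card_mul_sq_le_log_choose (h : IsNormalDecoder (2 * r) δ ε Enc H) (hr : 0 < r)
    (hδ : 0 ≤ δ) (hε : 0 ≤ ε) {l : ℕ} (hl : 2 * r ≤ l) (hm : 4 * l ≤ Fintype.card α)
    (hpow : (Fintype.card α : ℝ) ^ r ≤ (l - r : ℕ) ^ r * Fintype.card α) :
    Fintype.card ι * (ε * δ) ^ 2 ≤ 8 * Real.log ((Fintype.card α).choose l) := by
  have hα : (0 : ℝ) < Fintype.card α := by exact_mod_cast (by omega : 0 < Fintype.card α)
  have hcorr (i : ι) : ε * δ / 2 ≤ 𝔼 b : ι → Bool, pmo (b i) *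
      (kikuchiVector l (fun v => pmo (Enc b v)) ⬝ᵥ
        kikuchiMatrix l r (H i) (equalizingWeight l r (H i)) *ᵥ
          kikuchiVector l (fun v => pmo (Enc b v))) := by
    simp only [kikuchiVector_dotProduct_kikuchiMatrix_mulVec (h.card_eq i) (h.disjoint i) hr hl hm
      hpow (fun _ => pmo_mul_self _), mul_left_comm (pmo _)]
    rw [← mul_expect]
    simp only [mul_sum]
    rw [expect_sum_comm]
    calc ε * δ / 2 = (4 * Fintype.card α : ℝ)⁻¹ * (δ * Fintype.card α * (2 * ε)) := by
          field_simp
          ring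
      _ ≤ (4 * Fintype.card α : ℝ)⁻¹ * (#(H i) * (2 * ε)) := by
          gcongr
          exact h.le_card i
      _ ≤ _ := by
          gcongr
          rw [← nsmul_eq_mul]
          exact card_nsmul_le_sum _ _ _ (h.le_correlation i)
  have hbound := card_mul_sq_le_of_le_expect (d := 1)
    (fun i => isHermitian_kikuchiMatrix l r (H i) (equalizingWeight l r (H i)))
    (fun i => sum_abs_kikuchiMatrix_le (h.card_eq i) fun C =>
      abs_equalizingWeight_le_one (h.card_eq i) (h.disjoint i) hr hl hm hpow)
    (fun b => kikuchiVector_dotProduct_self (by omega) fun v => pmo_mul_self (Enc b v))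
    (by positivity) hcorr
  rw [Fintype.card_coe, card_powersetCard, card_univ] at hbound
  linarith

theorem card_mul_sq_le_of_nonempty (h : IsNormalDecoder q δ ε Enc H) (hε : 0 ≤ ε)
    (hne : ∀ i, (H i).Nonempty) :
    Fintype.card ι * ε ^ 2 ≤ Fintype.card α * Real.log 2 / 2 := by
  choose C hC using hne
  have habs (i : ι) (y : α → Bool) : |∏ v ∈ C i, pmo (y v)| = 1 := by
    rw [abs_prod]
    exact prod_eq_one fun v _ => by cases y v <;> norm_num [pmo]
  have hbound := card_mul_sq_le_of_le_expect (d := 1) (τ := 2 * ε)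
    (A := fun i => Matrix.diagonal fun y : α → Bool => ∏ v ∈ C i, pmo (y v))
    (x := fun b => Pi.single (Enc b) 1)
    (fun i => Matrix.isHermitian_diagonal _)
    (fun i y => by simp [Matrix.diagonal_apply, apply_ite abs, habs])
    (fun b => by simp) (by positivity)
    (fun i => by simpa using h.le_correlation i (C i) (hC i))
  simp only [Fintype.card_fun, Fintype.card_bool, Nat.cast_pow, Nat.cast_ofNat,
    Real.log_pow] at hbound
  linarith

theorem exists_pad (h : IsNormalDecoder q δ ε Enc H) {t : ℕ} (ht : t ≤ q) :
    ∃ H' : ι → Finset (Finset (α ⊕ α)),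
      IsNormalDecoder (q + t) (δ / 2) ε (fun b => Sum.elim (Enc b) fun _ => true) H' := by
  have hrep (C : Finset α) : t ≤ #C → ∃ T ⊆ C, #T = t := exists_subset_card_eq
  choose! rep hrep_subset hrep_card using hrep
  have hle {i : ι} {C : Finset α} (hC : C ∈ H i) : t ≤ #C := (h.card_eq i C hC).symm ▸ ht
  refine ⟨fun i => (H i).image fun C => C.disjSum (rep C), fun i => ?_, fun i => ?_, fun i => ?_,
    fun i => ?_⟩
  · rw [forall_mem_image]
    intro C hC
    rw [card_disjSum, h.card_eq i C hC, hrep_card C (hle hC)]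
  · rw [coe_image]
    rintro _ ⟨C, hC, rfl⟩ _ ⟨C', hC', rfl⟩ hne
    have hdisj := h.disjoint i hC hC' fun heq => hne (by rw [heq])
    have hdisj_rep := hdisj.mono (hrep_subset C (hle hC)) (hrep_subset C' (hle hC'))
    rw [Finset.disjoint_left] at hdisj hdisj_rep ⊢
    rintro (v | v)
    · simpa using @hdisj v
    · simpa using @hdisj_rep v
  · have hinj : Function.Injective fun C : Finset α => C.disjSum (rep C) := fun C C' heq =>
      (disjSum_inj.mp heq).1
    rw [card_image_of_injective _ hinj, Fintype.card_sum]
    push_cast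
    linarith [h.le_card i]
  · rw [forall_mem_image]
    intro C hC
    have hpad (b : ι → Bool) : ∏ v ∈ C.disjSum (rep C), pmo (Sum.elim (Enc b) (fun _ => true) v) =
        ∏ v ∈ C, pmo (Enc b v) := by
      simp [prod_disjSum, show pmo true = 1 from rfl]
    simpa only [hpad] using h.le_correlation i C hC

theorem card_mul_sq_le_of_even (h : IsNormalDecoder (2 * r) δ ε Enc H) (hr : 1 ≤ r)
    (hα : 2 ≤ Fintype.card α) (hδ : 0 < δ) (hε : 0 ≤ ε) :
    Fintype.card ι * (ε * δ) ^ 2 ≤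
      24 * (Fintype.card α : ℝ) ^ (1 - 1 / r : ℝ) * Real.log (Fintype.card α) := by
  set m := Fintype.card α
  have hm_pos : (0 : ℝ) < m := by exact_mod_cast (by omega : 0 < m)
  rcases le_or_gt (16 ^ r) m with hm | hm
  · obtain ⟨l, hl, hlm, hpow, hlX⟩ := exists_kikuchi_level (by omega) hm
    have hchoose_pos : (0 : ℝ) < m.choose l := by exact_mod_cast Nat.choose_pos (by omega)
    have hlog : Real.log (m.choose l) ≤ l * Real.log m := by
      rw [← Real.log_pow]
      exact Real.log_le_log hchoose_pos (by exact_mod_cast Nat.choose_le_pow m l)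
    calc Fintype.card ι * (ε * δ) ^ 2
        ≤ 8 * Real.log (m.choose l) := h.card_mul_sq_le_log_choose hr hδ.le hε hl hlm hpow
      _ ≤ 8 * (3 * (m : ℝ) ^ (1 - 1 / r : ℝ) * Real.log m) := by
          gcongr
          exact hlog.trans (mul_le_mul_of_nonneg_right hlX (Real.log_natCast_nonneg m))
      _ = 24 * (m : ℝ) ^ (1 - 1 / r : ℝ) * Real.log m := by ring
  · have hne (i : ι) : (H i).Nonempty := by
      rw [← card_pos]
      exact_mod_cast (mul_pos hδ hm_pos).trans_le (h.le_card i)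
    rcases isEmpty_or_nonempty ι with hι | hι
    · rw [Fintype.card_eq_zero, Nat.cast_zero, zero_mul]
      positivity
    · have : Nonempty α := Fintype.card_pos_iff.mp (by omega)
      have hδ_one : δ ≤ 1 := h.delta_le_one (by omega)
      have hX := le_mul_rpow_of_le_pow (y := 16) (by omega : r ≠ 0) hm_pos
        (by norm_num) (by exact_mod_cast hm.le)
      have hlog : Real.log 2 ≤ Real.log m := by
        gcongr
        exact_mod_cast hα
      calc Fintype.card ι * (ε * δ) ^ 2
          ≤ Fintype.card ι * (ε * 1) ^ 2 := by gcongr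
        _ = Fintype.card ι * ε ^ 2 := by rw [mul_one]
        _ ≤ m * Real.log 2 / 2 := h.card_mul_sq_le_of_nonempty hε hne
        _ ≤ 16 * (m : ℝ) ^ (1 - 1 / r : ℝ) * Real.log m / 2 := by gcongr
        _ ≤ 24 * (m : ℝ) ^ (1 - 1 / r : ℝ) * Real.log m := by
            have : 0 ≤ (m : ℝ) ^ (1 - 1 / r : ℝ) * Real.log m := by positivity
            linarith

theorem card_mul_sq_le (h : IsNormalDecoder q δ ε Enc H) (hq : 1 ≤ q)
    (hα : 2 ≤ Fintype.card α) (hδ : 0 < δ) (hε : 0 ≤ ε) :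
    Fintype.card ι * (ε * δ) ^ 2 ≤
      384 * (Fintype.card α : ℝ) ^ (1 - 1 / ((q + 1) / 2 : ℕ) : ℝ) *
        Real.log (Fintype.card α) := by
  obtain ⟨H', hH'⟩ := h.exists_pad (Nat.mod_le q 2)
  set r := (q + 1) / 2
  rw [show q + q % 2 = 2 * r by omega] at hH'
  have hbound := hH'.card_mul_sq_le_of_even (by omega) (by rw [Fintype.card_sum]; omega)
    (half_pos hδ) hε
  rw [Fintype.card_sum, ← two_mul, Nat.cast_mul, Nat.cast_two] at hbound
  set m := Fintype.card α
  have hm : (2 : ℝ) ≤ m := by exact_mod_cast hα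
  have hrpow : (2 * m : ℝ) ^ (1 - 1 / r : ℝ) ≤ 2 * (m : ℝ) ^ (1 - 1 / r : ℝ) := by
    rw [Real.mul_rpow zero_le_two m.cast_nonneg]
    gcongr
    exact Real.rpow_le_self_of_one_le one_le_two (sub_le_self 1 (by positivity))
  have hlog_nonneg : 0 ≤ Real.log (2 * m) := Real.log_nonneg (by linarith)
  have hlog : Real.log (2 * m) ≤ 2 * Real.log m := by
    rw [two_mul (Real.log _), Real.log_mul two_ne_zero (by positivity)]
    gcongr
  calc Fintype.card ι * (ε * δ) ^ 2
      = 4 * (Fintype.card ι * (ε * (δ / 2)) ^ 2) := by ring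
    _ ≤ 4 * (24 * (2 * m : ℝ) ^ (1 - 1 / r : ℝ) * Real.log (2 * m)) := by gcongr
    _ ≤ 4 * (24 * (2 * (m : ℝ) ^ (1 - 1 / r : ℝ)) * (2 * Real.log m)) := by gcongr
    _ = 384 * (m : ℝ) ^ (1 - 1 / r : ℝ) * Real.log m := by ring

end IsNormalDecoder

theorem odd_q_ldc_lower_bound_general :
    ∃ c : ℝ, 0 < c ∧
      ∀ (q k n : ℕ) (δ ε : ℝ) (Enc : (Fin k → Bool) → Fin n → Bool),
        1 ≤ q → 2 ≤ n → 0 < δ → 0 < ε → NormallyDecodable q k n δ ε Enc →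
        (k : ℝ) ≤ c * (n : ℝ) ^ (1 - 1 / ((q + 1) / 2 : ℕ) : ℝ) * Real.log n /
          (ε ^ 2 * δ ^ 2) := by
  refine ⟨384, by norm_num, fun q k n δ ε Enc hq hn hδ hε hdec => ?_⟩
  obtain ⟨H, hH⟩ := hdec.exists_isNormalDecoder
  rw [← mul_pow, le_div_iff₀ (by positivity)]
  simpa using hH.card_mul_sq_le hq (by simpa using hn) hδ hε.le

lemma natCast_add_one_div_two {q : ℕ} (hq : Odd q) :
    (((q + 1) / 2 : ℕ) : ℝ) = ((q : ℝ) + 1) / 2 := by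
  rw [Nat.cast_div hq.add_one.two_dvd two_ne_zero, Nat.cast_add_one, Nat.cast_two]

/-- **Known LDC lower bound, odd `q`.** There is an absolute constant `c > 0` such
that for every odd `q ≥ 3`, `n ≥ 2`, and every `(q, δ, ε)`-normally decodable code
`Enc : {-1,1}^k → {-1,1}^n`, we have `k ≤ c · n^{1 - 2/(q+1)} · (log n) / (ε² δ²)`. -/
theorem odd_q_ldc_lower_bound :
    ∃ c : ℝ, 0 < c ∧
      ∀ (q k n : ℕ) (δ ε : ℝ) (Enc : (Fin k → Bool) → Fin n → Bool),
        3 ≤ q → Odd q → 2 ≤ n → 0 < δ → 0 < ε →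
        NormallyDecodable q k n δ ε Enc →
        (k : ℝ) ≤ c * (n : ℝ) ^ (1 - 2 / ((q : ℝ) + 1)) * Real.log n / (ε ^ 2 * δ ^ 2) := by
  obtain ⟨c, hc, hbound⟩ := odd_q_ldc_lower_bound_general
  refine ⟨c, hc, fun q k n δ ε Enc hq hodd hn hδ hε hdec => ?_⟩
  simpa only [natCast_add_one_div_two hodd, one_div_div] using
    hbound q k n δ ε Enc (by omega) hn hδ hε hdec
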